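/- Let {G, (Γ0, Γ1), (Γ̃0, Γ̃1)} be a generalized boundary triple for the adjoint pair {S, S̃} with core {T, T̃} of {S*, S̃*}, assume ρ(A0) ≠ ∅, and let M, M̃ be the associated Weyl functions. Then for every λ ∈ ρ(A0) the Weyl function value M(λ) is an everywhere defined bounded operator in G, i.e., there exists C ≥ 0 such that ‖Γ1 f‖_G ≤ C ‖Γ0 f‖_G for all f ∈ ker(T − λ), and M(λ) Γ0 fλ = Γ1 fλ for every fλ ∈ dom T with T fλ = λ fλ. Analogously, for every μ ∈ ρ(Ã0), M̃(μ) is an everywhere defined bounded operator in G and M̃(μ) Γ̃0 gμ = Γ̃1 gμ for every gμ ∈ dom T̃ with T̃ gμ = μ gμ. -/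

import Mathlib

/-!
Boundedness of the Weyl function is a Hellinger–Toeplitz argument. For `f ∈ ker (T - λ)` and
`g ∈ ker (T̃ - λ̄)` Green's identity reduces to `(Γ1 f, Γ̃0 g) = (Γ0 f, Γ̃1 g)`. If `R` is the
resolvent of `A0` at `λ`, then `R*` is a right inverse of `A0* - λ̄ = Ã0 - λ̄`, so every `g₀ ∈ dom T̃`
can be corrected by an element of `ker Γ̃0` to lie in `ker (T̃ - λ̄)`; hence `Γ̃0` maps
`ker (T̃ - λ̄)` onto `G`. Thus the vectors `Γ1 f / ‖Γ0 f‖`, `f ∈ ker (T - λ)`, are weakly bounded,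
and the uniform boundedness principle bounds them in norm. Well-definedness of `M(λ)` is injectivity
of `A0 - λ`. The claims about `M̃` follow by exchanging the roles of the two operators.
-/

open scoped ComplexInnerProductSpace

noncomputable section

/-- The inner product in the convention of the paper: linear in the *first* argument and
conjugate-linear in the second (the opposite of Mathlib's convention). -/
def pinner {E : Type*} [NormedAddCommGroup E] [InnerProductSpace ℂ E] (x y : E) : ℂ :=
  ⟪y, x⟫

variable {H G : Type*}
  [NormedAddCommGroup H] [InnerProductSpace ℂ H] [CompleteSpace H]
  [NormedAddCommGroup G] [InnerProductSpace ℂ G] [CompleteSpace G]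

/-- The restriction of a partially defined linear operator `T` in `H` to a submodule `p` of its
domain, viewed again as a partially defined linear operator in `H`. -/
def LinearPMap.restrictTo (T : H →ₗ.[ℂ] H) (p : Submodule ℂ T.domain) : H →ₗ.[ℂ] H where
  domain := p.map T.domain.subtype
  toFun := T.toFun ∘ₗ p.subtype ∘ₗ
    (Submodule.equivMapOfInjective T.domain.subtype (Submodule.injective_subtype _)
      p).symm.toLinearMap

/-- `R` is the (everywhere defined, bounded) resolvent of the operator `A` at the point `lam`,
i.e. `R` is a two-sided inverse of `A - lam`. -/
def ResolventAt (A : H →ₗ.[ℂ] H) (lam : ℂ) (R : H →L[ℂ] H) : Prop :=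
  (∀ x : A.domain, R (A x - lam • (x : H)) = (x : H)) ∧
  (∀ h : H, ∃ x : A.domain, (x : H) = R h ∧ A x - lam • (x : H) = h)

/-- `lam` belongs to the resolvent set of `A`: `A - lam` is a bijection of `dom A` onto `H`
with a bounded everywhere defined inverse. -/
def InResolventSet (A : H →ₗ.[ℂ] H) (lam : ℂ) : Prop :=
  ∃ R : H →L[ℂ] H, ResolventAt A lam R

/-- `{G, (Γ0, Γ1), (Γt0, Γt1)}` is a generalized boundary triple for the adjoint pair `{S, St}`
with core `{T, Tt}` of `{S*, St*}`. -/
structure IsGeneralizedBoundaryTriple (S St T Tt : H →ₗ.[ℂ] H)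
    (Γ0 Γ1 : T.domain →ₗ[ℂ] G) (Γt0 Γt1 : Tt.domain →ₗ[ℂ] G) : Prop where
  dense_S : Dense (S.domain : Set H)
  dense_St : Dense (St.domain : Set H)
  closed_S : S.IsClosed
  closed_St : St.IsClosed
  adjoint_pair : ∀ (f : S.domain) (g : St.domain),
    pinner (S f) (g : H) = pinner (f : H) (St g)
  T_le : T ≤ S.adjoint
  Tt_le : Tt ≤ St.adjoint
  T_adjoint : T.adjoint = S
  Tt_adjoint : Tt.adjoint = St
  green : ∀ (f : T.domain) (g : Tt.domain),
    pinner (T f) (g : H) - pinner (f : H) (Tt g)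
      = pinner (Γ1 f) (Γt0 g) - pinner (Γ0 f) (Γt1 g)
  surj_Γ0 : Function.Surjective Γ0
  surj_Γt0 : Function.Surjective Γt0
  A0_adjoint : (T.restrictTo (LinearMap.ker Γ0)).adjoint = Tt.restrictTo (LinearMap.ker Γt0)
  At0_adjoint : (Tt.restrictTo (LinearMap.ker Γt0)).adjoint = T.restrictTo (LinearMap.ker Γ0)

theorem LinearPMap.restrictTo_apply (T : H →ₗ.[ℂ] H) (p : Submodule ℂ T.domain)
    (x : (T.restrictTo p).domain) :
    ∃ y : T.domain, y ∈ p ∧ (y : H) = x ∧ T y = T.restrictTo p x := by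
  set e := Submodule.equivMapOfInjective T.domain.subtype (Submodule.injective_subtype _) p
  refine ⟨(e.symm x : p), (e.symm x).2, ?_, rfl⟩
  exact congrArg Subtype.val (e.apply_symm_apply x)

theorem LinearPMap.exists_restrictTo (T : H →ₗ.[ℂ] H) (p : Submodule ℂ T.domain)
    (y : T.domain) (hy : y ∈ p) :
    ∃ x : (T.restrictTo p).domain, (x : H) = y ∧ T.restrictTo p x = T y := by
  let x : (T.restrictTo p).domain := ⟨y, y, hy, rfl⟩
  obtain ⟨z, -, hz, hTz⟩ := T.restrictTo_apply p x
  refine ⟨x, rfl, ?_⟩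
  rw [← hTz, Subtype.ext hz]

/-- The adjoint domain can only grow under restriction. No density is needed, because Mathlib's
`adjoint` keeps its natural domain even where its values are junk. -/
theorem LinearPMap.adjoint_domain_le_restrictTo (T : H →ₗ.[ℂ] H) (p : Submodule ℂ T.domain) :
    T.adjoint.domain ≤ (T.restrictTo p).adjoint.domain := by
  intro y hy
  rw [LinearPMap.mem_adjoint_domain_iff] at hy ⊢
  let i : (T.restrictTo p).domain → T.domain :=
    fun x => ⟨x, Submodule.map_subtype_le T.domain p x.2⟩
  have hi : Continuous i := continuous_subtype_val.subtype_mk _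
  refine (hy.comp hi).congr fun x => ?_
  obtain ⟨z, -, hz, hTz⟩ := T.restrictTo_apply p x
  have hzi : i x = z := Subtype.ext hz.symm
  simp [hzi, ← hTz]

/-- The adjoint of the resolvent at `lam` is a right inverse of the adjoint minus `conj lam`. -/
theorem ResolventAt.exists_adjoint {A : H →ₗ.[ℂ] H} {lam : ℂ} {R : H →L[ℂ] H}
    (hR : ResolventAt A lam R) (hA : Dense (A.domain : Set H)) (k : H) :
    ∃ x : A.adjoint.domain, A.adjoint x - (starRingEnd ℂ lam) • (x : H) = k := by
  set w : H := k + (starRingEnd ℂ lam) • R.adjoint k with hw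
  have key : ∀ x : A.domain, ⟪w, (x : H)⟫ = ⟪R.adjoint k, A x⟫ := by
    intro x
    have h := hR.1 x
    rw [map_sub, map_smul, sub_eq_iff_eq_add] at h
    rw [hw, ContinuousLinearMap.adjoint_inner_left, h, inner_add_left, inner_add_right,
      inner_smul_left, inner_smul_right, ContinuousLinearMap.adjoint_inner_left]
    simp
  have hmem : R.adjoint k ∈ A.adjoint.domain :=
    LinearPMap.mem_adjoint_domain_of_exists _ ⟨w, key⟩
  refine ⟨⟨_, hmem⟩, ?_⟩
  rw [LinearPMap.adjoint_apply_eq hA ⟨_, hmem⟩ key, hw]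
  simp

namespace IsGeneralizedBoundaryTriple

variable {S St T Tt : H →ₗ.[ℂ] H} {Γ0 Γ1 : T.domain →ₗ[ℂ] G} {Γt0 Γt1 : Tt.domain →ₗ[ℂ] G}

/-- The notion is symmetric under exchanging the two operators of the adjoint pair. -/
theorem symm (h : IsGeneralizedBoundaryTriple S St T Tt Γ0 Γ1 Γt0 Γt1) :
    IsGeneralizedBoundaryTriple St S Tt T Γt0 Γt1 Γ0 Γ1 where
  dense_S := h.dense_St
  dense_St := h.dense_S
  closed_S := h.closed_St
  closed_St := h.closed_S
  adjoint_pair f g := by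
    have := congrArg (starRingEnd ℂ) (h.adjoint_pair g f)
    simp only [pinner, inner_conj_symm] at this ⊢
    exact this.symm
  T_le := h.Tt_le
  Tt_le := h.T_le
  T_adjoint := h.Tt_adjoint
  Tt_adjoint := h.T_adjoint
  green f g := by
    have := congrArg (starRingEnd ℂ) (h.green g f)
    simp only [pinner, map_sub, inner_conj_symm] at this ⊢
    linear_combination -this
  surj_Γ0 := h.surj_Γt0
  surj_Γt0 := h.surj_Γ0
  A0_adjoint := h.At0_adjoint
  At0_adjoint := h.A0_adjoint

theorem dense_A0 (h : IsGeneralizedBoundaryTriple S St T Tt Γ0 Γ1 Γt0 Γt1) :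
    Dense ((T.restrictTo (LinearMap.ker Γ0)).domain : Set H) := by
  -- `S̃ = T̃* ⊆ Ã0* = A0` on the level of domains
  refine h.dense_St.mono ?_
  have := Tt.adjoint_domain_le_restrictTo (LinearMap.ker Γt0)
  rwa [h.At0_adjoint, h.Tt_adjoint] at this

theorem eq_zero_of_mem_ker {lam : ℂ}
    (hlam : InResolventSet (T.restrictTo (LinearMap.ker Γ0)) lam)
    {f : T.domain} (hf : T f = lam • (f : H)) (h0 : Γ0 f = 0) : f = 0 := by
  obtain ⟨R, hR⟩ := hlam
  obtain ⟨x, hx, hTx⟩ := T.exists_restrictTo (LinearMap.ker Γ0) f h0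
  have := hR.1 x
  rw [hTx, hx, hf, sub_self, map_zero] at this
  exact Subtype.ext this.symm

/-- `Γ̃0` maps `ker (T̃ - λ̄)` onto `G` whenever `λ ∈ ρ(A0)`. -/
theorem exists_defect (h : IsGeneralizedBoundaryTriple S St T Tt Γ0 Γ1 Γt0 Γt1) {lam : ℂ}
    (hlam : InResolventSet (T.restrictTo (LinearMap.ker Γ0)) lam) (ψ : G) :
    ∃ g : Tt.domain, Tt g = (starRingEnd ℂ lam) • (g : H) ∧ Γt0 g = ψ := by
  obtain ⟨R, hR⟩ := hlam
  obtain ⟨g₀, hg₀⟩ := h.surj_Γt0 ψ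
  have hex := hR.exists_adjoint h.dense_A0 (Tt g₀ - (starRingEnd ℂ lam) • (g₀ : H))
  rw [h.A0_adjoint] at hex
  obtain ⟨x, hx⟩ := hex
  obtain ⟨y, hy, hyx, hTy⟩ := Tt.restrictTo_apply _ x
  rw [← hTy, ← hyx] at hx
  refine ⟨g₀ - y, ?_, ?_⟩
  · rw [LinearPMap.map_sub, Submodule.coe_sub, smul_sub, sub_eq_sub_iff_sub_eq_sub]
    exact hx.symm
  · rw [map_sub, LinearMap.mem_ker.1 hy, sub_zero, hg₀]

theorem weyl_unique {lam : ℂ} (hlam : InResolventSet (T.restrictTo (LinearMap.ker Γ0)) lam)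
    (f f' : T.domain) (hf : T f = lam • (f : H)) (hf' : T f' = lam • (f' : H))
    (h0 : Γ0 f = Γ0 f') : Γ1 f = Γ1 f' := by
  have : f - f' = 0 := eq_zero_of_mem_ker (Γ0 := Γ0) hlam
    (by rw [LinearPMap.map_sub, Submodule.coe_sub, smul_sub, hf, hf']) (by simp [h0])
  rw [sub_eq_zero.1 this]

theorem weyl_bounded (h : IsGeneralizedBoundaryTriple S St T Tt Γ0 Γ1 Γt0 Γt1) {lam : ℂ}
    (hlam : InResolventSet (T.restrictTo (LinearMap.ker Γ0)) lam) :
    ∃ C : ℝ, 0 ≤ C ∧ ∀ f : T.domain, T f = lam • (f : H) → ‖Γ1 f‖ ≤ C * ‖Γ0 f‖ := by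
  let F : {f : T.domain // T f = lam • (f : H)} → (G →L[ℂ] ℂ) :=
    fun f => ((‖Γ0 f.1‖⁻¹ : ℝ) : ℂ) • innerSL ℂ (Γ1 f.1)
  obtain ⟨C, hC⟩ : ∃ C, ∀ f, ‖F f‖ ≤ C := by
    apply banach_steinhaus
    intro ψ
    obtain ⟨g, hg, rfl⟩ := h.exists_defect hlam ψ
    refine ⟨‖Γt1 g‖, fun f => ?_⟩
    have hgr := h.green f.1 g
    simp only [pinner, f.2, hg, inner_smul_left, inner_smul_right, starRingEnd_self_apply,
      sub_self] at hgr
    have hnorm : ‖F f (Γt0 g)‖ = ‖Γ0 f.1‖⁻¹ * ‖⟪Γt1 g, Γ0 f.1⟫‖ := by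
      rw [← sub_eq_zero.1 hgr.symm, norm_inner_symm (Γt0 g)]
      simp [F]
    rw [hnorm]
    calc ‖Γ0 f.1‖⁻¹ * ‖⟪Γt1 g, Γ0 f.1⟫‖ ≤ ‖Γ0 f.1‖⁻¹ * (‖Γt1 g‖ * ‖Γ0 f.1‖) := by
          gcongr
          exact norm_inner_le_norm _ _
      _ = (‖Γ0 f.1‖⁻¹ * ‖Γ0 f.1‖) * ‖Γt1 g‖ := by ring
      _ ≤ 1 * ‖Γt1 g‖ := by
          gcongr
          exact inv_mul_le_one
      _ = ‖Γt1 g‖ := one_mul _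
  refine ⟨max C 0, le_max_right _ _, fun f hf => ?_⟩
  by_cases h0 : Γ0 f = 0
  · simp [eq_zero_of_mem_ker hlam hf h0]
  · have hpos : 0 < ‖Γ0 f‖ := norm_pos_iff.2 h0
    have hFC := (hC ⟨f, hf⟩).trans (le_max_left C 0)
    simp only [F, norm_smul, innerSL_apply_norm, Complex.norm_real, norm_inv, norm_norm] at hFC
    rwa [inv_mul_le_iff₀ hpos, mul_comm] at hFC

end IsGeneralizedBoundaryTriple

theorem stmt9
    (S St T Tt : H →ₗ.[ℂ] H)
    (Γ0 Γ1 : T.domain →ₗ[ℂ] G) (Γt0 Γt1 : Tt.domain →ₗ[ℂ] G)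
    (hgbt : IsGeneralizedBoundaryTriple S St T Tt Γ0 Γ1 Γt0 Γt1)
    (lam mu : ℂ)
    (hlam : InResolventSet (T.restrictTo (LinearMap.ker Γ0)) lam)
    (hmu : InResolventSet (Tt.restrictTo (LinearMap.ker Γt0)) mu) :
    ((∃ C : ℝ, 0 ≤ C ∧ ∀ f : T.domain, T f = lam • (f : H) → ‖Γ1 f‖ ≤ C * ‖Γ0 f‖) ∧
      (∀ f f' : T.domain, T f = lam • (f : H) → T f' = lam • (f' : H) →
        Γ0 f = Γ0 f' → Γ1 f = Γ1 f')) ∧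
    ((∃ C : ℝ, 0 ≤ C ∧ ∀ g : Tt.domain, Tt g = mu • (g : H) → ‖Γt1 g‖ ≤ C * ‖Γt0 g‖) ∧
      (∀ g g' : Tt.domain, Tt g = mu • (g : H) → Tt g' = mu • (g' : H) →
        Γt0 g = Γt0 g' → Γt1 g = Γt1 g')) := by
  exact ⟨⟨hgbt.weyl_bounded hlam, IsGeneralizedBoundaryTriple.weyl_unique hlam⟩,
    ⟨hgbt.symm.weyl_bounded hmu, IsGeneralizedBoundaryTriple.weyl_unique hmu⟩⟩

end
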